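/- arXiv:2312.16483 — 4 statements merged into one kernel-verified Lean document; each statement's English description precedes it below -/
import Mathlib

section
/- Let n, d be positive integers and let α = (α₁, …, α_d) ∈ ℕᵈ with α₁ + ⋯ + α_d = n. Then there exist real coefficients c_{n₂,…,n_d}, indexed by integers n₂, …, n_d ranging over {−⌊n/2⌋, −⌊n/2⌋+1, …, n−⌊n/2⌋}, such that every coefficient satisfies |c_{n₂,…,n_d}| ≤ (n/2 + 1)^{2d}, and for all x = (x₁, …, x_d) ∈ ℝᵈ, x₁^{α₁} ⋯ x_d^{α_d} = Σ_{n₂,…,n_d = −⌊n/2⌋}^{n−⌊n/2⌋} c_{n₂,…,n_d} (x₁ + n₂x₂ + ⋯ + n_d x_d)ⁿ. -/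
/-!
Let `S = {-⌊n/2⌋, …, n - ⌊n/2⌋}`, a set of `n + 1` nodes, and let `ℓ_{m,k}` be the coefficient of
`t ^ k` in the Lagrange basis polynomial of `S` at the node `m`. Interpolating `t ^ j` for `j ≤ n`
gives `∑ m ∈ S, ℓ_{m,k} m ^ j = δ_{jk}` (`sum_lagrangeCoeff_mul_pow`). With
`c_ν = (multinomial α)⁻¹ ∏_{i ≥ 2} ℓ_{ν_i, α_i}`, expanding `(x₁ + ∑ ν_i x_i) ^ n` by the multinomial
theorem and summing over `ν` kills every exponent `β` with `β_i ≠ α_i` for some `i ≥ 2`; since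
`∑ β = ∑ α = n`, only `β = α` survives.

For the bound, the absolute values of the coefficients of `∏ (t - j) / (m - j)` sum to at most
`∏_{j ≠ m} (1 + |j|) / |m - j|`. With `a = ⌊n/2⌋` and `b = n - a` this is at most
`(a + 1)! (b + 1)! / ((m + a)! (b - m)!)`. As the middle binomial coefficient is the largest,
this is at most `(a + 1) (b + 1) ≤ (n / 2 + 1) ^ 2`.
-/

open Polynomial in
/-- The `ℓ¹` norm of coefficients is submultiplicative against a linear factor. Truncating the
sum at `K` avoids any discussion of degrees. -/
lemma sum_abs_coeff_prod_le {ι : Type*} [DecidableEq ι] (s : Finset ι) (a b : ι → ℝ) (K : ℕ) :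
    ∑ k ∈ Finset.range K, |(∏ i ∈ s, (C (a i) * (X - C (b i)) : ℝ[X])).coeff k| ≤
      ∏ i ∈ s, |a i| * (1 + |b i|) := by
  induction s using Finset.induction_on with
  | empty =>
    simp only [Finset.prod_empty, coeff_one]
    calc _ = ∑ k ∈ Finset.range K, (if k = 0 then (1 : ℝ) else 0) := by
          refine Finset.sum_congr rfl fun k _ => ?_
          split_ifs <;> simp
      _ ≤ 1 := by
          rw [Finset.sum_ite_eq']
          split_ifs <;> norm_num
  | insert i s hi ih =>
    rw [Finset.prod_insert hi, Finset.prod_insert hi]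
    set p : ℝ[X] := ∏ i ∈ s, (C (a i) * (X - C (b i)) : ℝ[X]) with hp
    have e : C (a i) * (X - C (b i)) * p = C (a i) * (X * p - C (b i) * p) := by ring
    have h1 : ∀ k, |(C (a i) * (X - C (b i)) * p).coeff k| ≤
        |a i| * (|(X * p).coeff k| + |b i| * |p.coeff k|) := by
      intro k
      rw [e, coeff_C_mul, coeff_sub, coeff_C_mul, abs_mul, ← abs_mul (b i)]
      gcongr
      exact abs_sub _ _
    have h2 : ∑ k ∈ Finset.range K, |(X * p).coeff k| ≤ ∑ k ∈ Finset.range K, |p.coeff k| := by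
      cases K with
      | zero => simp
      | succ K =>
        rw [Finset.sum_range_succ', Finset.sum_range_succ]
        simp only [coeff_X_mul, coeff_X_mul_zero, abs_zero, add_zero]
        have := abs_nonneg (p.coeff K)
        linarith
    calc _ ≤ ∑ k ∈ Finset.range K, |a i| * (|(X * p).coeff k| + |b i| * |p.coeff k|) :=
          Finset.sum_le_sum fun k _ => h1 k
      _ = |a i| * (∑ k ∈ Finset.range K, |(X * p).coeff k| +
            |b i| * ∑ k ∈ Finset.range K, |p.coeff k|) := by
          rw [← Finset.mul_sum, Finset.sum_add_distrib, ← Finset.mul_sum]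
      _ ≤ |a i| * (∑ k ∈ Finset.range K, |p.coeff k| +
            |b i| * ∑ k ∈ Finset.range K, |p.coeff k|) := by gcongr
      _ = |a i| * (1 + |b i|) * ∑ k ∈ Finset.range K, |p.coeff k| := by ring
      _ ≤ _ := by gcongr

lemma prod_Icc_erase (m : ℤ) (f : ℤ → ℝ) (q p : ℕ) :
    ∏ j ∈ (Finset.Icc (m - q) (m + p)).erase m, f j =
      (∏ i ∈ Finset.range q, f (m - (i + 1))) * ∏ i ∈ Finset.range p, f (m + (i + 1)) := by
  induction p with
  | zero =>
    induction q with
    | zero => simp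
    | succ q ih =>
      have : (Finset.Icc (m - ((q + 1 : ℕ) : ℤ)) (m + (0 : ℕ))).erase m =
          insert (m - ((q : ℤ) + 1)) ((Finset.Icc (m - (q : ℤ)) (m + (0 : ℕ))).erase m) := by
        ext j; simp only [Finset.mem_erase, Finset.mem_Icc, Finset.mem_insert]; omega
      have hmem : m - ((q : ℤ) + 1) ∉ (Finset.Icc (m - (q : ℤ)) (m + (0 : ℕ))).erase m := by
        simp only [Finset.mem_erase, Finset.mem_Icc]; omega
      rw [this, Finset.prod_insert hmem, ih, Finset.prod_range_succ]
      ring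
  | succ p ih =>
    have : (Finset.Icc (m - (q : ℤ)) (m + ((p + 1 : ℕ) : ℤ))).erase m =
        insert (m + ((p : ℤ) + 1)) ((Finset.Icc (m - (q : ℤ)) (m + p)).erase m) := by
      ext j; simp only [Finset.mem_erase, Finset.mem_Icc, Finset.mem_insert]; omega
    rw [this, Finset.prod_insert (by simp), ih, Finset.prod_range_succ]
    ring

lemma prod_range_succ_cast (q : ℕ) :
    ∏ i ∈ Finset.range q, ((i : ℝ) + 1) = (q.factorial : ℝ) := by
  rw [← Finset.prod_range_add_one_eq_factorial]; push_cast; rfl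

lemma prod_range_two_cast (q : ℕ) :
    ∏ i ∈ Finset.range q, (1 + ((i : ℝ) + 1)) = ((q + 1).factorial : ℝ) := by
  rw [← Finset.prod_range_add_one_eq_factorial, Finset.prod_range_succ']
  push_cast
  simp [add_comm]

lemma prod_abs_sub (m : ℤ) (q p : ℕ) :
    ∏ j ∈ (Finset.Icc (m - q) (m + p)).erase m, |(m : ℝ) - (j : ℝ)| =
      (q.factorial : ℝ) * p.factorial := by
  rw [prod_Icc_erase m (fun j : ℤ => |(m : ℝ) - (j : ℝ)|), ← prod_range_succ_cast,
    ← prod_range_succ_cast]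
  congr 1
  · refine Finset.prod_congr rfl fun i _ => ?_
    push_cast
    rw [sub_sub_cancel, abs_of_nonneg (by positivity)]
  · refine Finset.prod_congr rfl fun i _ => ?_
    push_cast
    rw [sub_add_cancel_left, abs_neg, abs_of_nonneg (by positivity)]

lemma prod_one_add_abs (a b : ℕ) :
    ∏ j ∈ Finset.Icc (-(a : ℤ)) (b : ℤ), (1 + |(j : ℝ)|) =
      ((a + 1).factorial : ℝ) * (b + 1).factorial := by
  have h := prod_Icc_erase 0 (fun j : ℤ => 1 + |(j : ℝ)|) a b
  have h0 : (0 : ℤ) ∈ Finset.Icc (-(a : ℤ)) (b : ℤ) := by simp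
  rw [← Finset.mul_prod_erase _ _ h0]
  rw [zero_sub, zero_add] at h
  rw [h, ← prod_range_two_cast, ← prod_range_two_cast]
  simp only [Int.cast_zero, abs_zero, add_zero, one_mul]
  congr 1
  · refine Finset.prod_congr rfl fun i _ => ?_
    push_cast
    rw [zero_sub, abs_neg, abs_of_nonneg (by positivity)]
  · refine Finset.prod_congr rfl fun i _ => ?_
    push_cast
    rw [zero_add, abs_of_nonneg (by positivity)]

/-- Maximality of the middle binomial coefficient, in terms of factorials. -/
lemma factorial_middle_le (n q p : ℕ) (h : q + p = n) :
    (n / 2).factorial * (n - n / 2).factorial ≤ q.factorial * p.factorial := by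
  have h1 := Nat.choose_mul_factorial_mul_factorial (Nat.div_le_self n 2)
  have h2 := Nat.choose_mul_factorial_mul_factorial (show q ≤ n by omega)
  rw [show n - q = p by omega] at h2
  have h3 := Nat.choose_le_middle q n
  have h4 : 0 < n.choose q := Nat.choose_pos (by omega)
  refine Nat.le_of_mul_le_mul_left ?_ h4
  calc _ ≤ n.choose (n / 2) * ((n / 2).factorial * (n - n / 2).factorial) :=
        Nat.mul_le_mul_right _ h3
    _ = _ := by rw [← mul_assoc, ← mul_assoc, h1, h2]

/-- The nodes `-⌊n/2⌋, …, n - ⌊n/2⌋`. -/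
noncomputable def nodes (n : ℕ) : Finset ℤ :=
  Finset.Icc (-((n / 2 : ℕ) : ℤ)) ((n : ℤ) - ((n / 2 : ℕ) : ℤ))

/-- The coefficient of `t ^ k` in the Lagrange basis polynomial of `nodes n` at the node `m`. -/
noncomputable def lagrangeCoeff (n : ℕ) (m : ℤ) (k : ℕ) : ℝ :=
  (Lagrange.basis (nodes n) (fun z : ℤ => (z : ℝ)) m).coeff k

open Polynomial in
lemma abs_lagrangeCoeff_le (n : ℕ) (m : ℤ) (hm : m ∈ nodes n) (k : ℕ) :
    |lagrangeCoeff n m k| ≤ ((n : ℝ) / 2 + 1) ^ 2 := by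
  obtain ⟨a, ha⟩ : ∃ a, a = n / 2 := ⟨_, rfl⟩
  obtain ⟨b, hb⟩ : ∃ b, b = n - n / 2 := ⟨_, rfl⟩
  have hab : a + b = n := by omega
  have hnodes : nodes n = Finset.Icc (-(a : ℤ)) (b : ℤ) := by
    rw [nodes]; congr 1 <;> omega
  have hm' := hm
  rw [hnodes, Finset.mem_Icc] at hm'
  obtain ⟨q, hq⟩ : ∃ q : ℕ, (q : ℤ) = m + a := ⟨(m + a).toNat, by omega⟩
  obtain ⟨p, hp⟩ : ∃ p : ℕ, (p : ℤ) = b - m := ⟨(b - m).toNat, by omega⟩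
  have hnodes' : nodes n = Finset.Icc (m - q) (m + p) := by
    rw [hnodes]; congr 1 <;> omega
  have h1 : |lagrangeCoeff n m k| ≤
      ∏ j ∈ (nodes n).erase m, |((m : ℝ) - (j : ℝ))⁻¹| * (1 + |(j : ℝ)|) := by
    refine le_trans ?_ (sum_abs_coeff_prod_le ((nodes n).erase m)
      (fun j : ℤ => ((m : ℝ) - (j : ℝ))⁻¹) (fun j : ℤ => (j : ℝ)) (k + 1))
    exact Finset.single_le_sum
      (f := fun k => |(∏ j ∈ (nodes n).erase m,
        (C ((m : ℝ) - (j : ℝ))⁻¹ * (X - C (j : ℝ)) : ℝ[X])).coeff k|)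
      (fun _ _ => abs_nonneg _) (Finset.mem_range.2 (Nat.lt_succ_self k))
  have h2 : ∏ j ∈ (nodes n).erase m, (1 + |(j : ℝ)|) ≤
      ((a + 1).factorial : ℝ) * (b + 1).factorial := by
    rw [← prod_one_add_abs, ← hnodes, ← Finset.mul_prod_erase _ _ hm]
    exact le_mul_of_one_le_left (Finset.prod_nonneg fun _ _ => by positivity)
      (by have := abs_nonneg (m : ℝ); linarith)
  have h3 : ∏ j ∈ (nodes n).erase m, |((m : ℝ) - (j : ℝ))⁻¹| =
      ((q.factorial : ℝ) * p.factorial)⁻¹ := by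
    simp only [abs_inv]
    rw [Finset.prod_inv_distrib, hnodes', prod_abs_sub]
  have h4 : (a.factorial : ℝ) * b.factorial ≤ (q.factorial : ℝ) * p.factorial := by
    have := factorial_middle_le n q p (by omega)
    rw [← hb, ← ha] at this
    exact_mod_cast this
  have hn : (n : ℝ) = a + b := by rw [← hab]; push_cast; rfl
  rw [Finset.prod_mul_distrib, h3] at h1
  refine h1.trans ?_
  rw [inv_mul_le_iff₀ (by positivity)]
  refine h2.trans ?_
  rw [Nat.factorial_succ, Nat.factorial_succ]
  push_cast
  calc ((a : ℝ) + 1) * a.factorial * (((b : ℝ) + 1) * b.factorial)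
      = (a.factorial * b.factorial) * (((a : ℝ) + 1) * (b + 1)) := by ring
    _ ≤ (q.factorial * p.factorial) * ((n : ℝ) / 2 + 1) ^ 2 := by
      gcongr
      rw [hn]
      nlinarith [sq_nonneg ((a : ℝ) - b)]

open Polynomial in
/-- The coefficients of the Lagrange basis invert the Vandermonde matrix of the nodes. -/
lemma sum_lagrangeCoeff_mul_pow (n j k : ℕ) (hj : j ≤ n) :
    ∑ m ∈ nodes n, lagrangeCoeff n m k * (m : ℝ) ^ j = if j = k then 1 else 0 := by
  have hinj : Set.InjOn (fun z : ℤ => (z : ℝ)) (nodes n) := fun _ _ _ _ h => Int.cast_injective h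
  have hcard : (nodes n).card = n + 1 := by
    rw [nodes, Int.card_Icc]; omega
  have h := Lagrange.eq_interpolate (f := (X ^ j : ℝ[X])) hinj (by
    rw [degree_X_pow, hcard]; exact_mod_cast Nat.lt_succ_of_le hj)
  have h' := congrArg (fun p : ℝ[X] => p.coeff k) h
  simp only [Lagrange.interpolate_apply, finsetSum_coeff, coeff_C_mul, coeff_X_pow, eval_pow,
    eval_X] at h'
  simp only [lagrangeCoeff]
  rw [show (if j = k then (1 : ℝ) else 0) = if k = j then 1 else 0 by simp only [eq_comm], h']
  exact Finset.sum_congr rfl fun _ _ => mul_comm _ _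


/-- for positive integers `n, d` and a multi-index `α ∈ ℕᵈ` with
`α₁ + ⋯ + α_d = n`, there are coefficients `c_{n₂,…,n_d}` indexed by integer tuples
`(n₂, …, n_d)` with each `n_j ∈ {−⌊n/2⌋, …, n − ⌊n/2⌋}` (realized here as functions
`ν : Fin d → ℤ` with `ν 0 = 1`, the coefficient of `x₁`), each bounded in absolute
value by `(n/2 + 1)^{2d}`, such that for all `x ∈ ℝᵈ`,
`x^α = Σ c_{n₂,…,n_d} (x₁ + n₂ x₂ + ⋯ + n_d x_d)^n`. -/
theorem monomial_representation (n d : ℕ) (hn : 0 < n) (hd : 0 < d)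
    (α : Fin d → ℕ) (hα : ∑ i, α i = n) :
    ∃ c : (Fin d → ℤ) → ℝ,
      (∀ ν : Fin d → ℤ, |c ν| ≤ ((n : ℝ) / 2 + 1) ^ (2 * d)) ∧
      ∀ x : Fin d → ℝ,
        ∏ i, x i ^ α i =
          ∑ ν ∈ Fintype.piFinset (fun i : Fin d =>
              if i = (⟨0, hd⟩ : Fin d) then ({1} : Finset ℤ)
              else Finset.Icc (-((n / 2 : ℕ) : ℤ)) ((n : ℤ) - ((n / 2 : ℕ) : ℤ))),
            c ν * (∑ i, (ν i : ℝ) * x i) ^ n := by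
  classical
  set o : Fin d := ⟨0, hd⟩ with ho
  set t : Fin d → Finset ℤ := fun i => if i = o then ({1} : Finset ℤ)
    else Finset.Icc (-((n / 2 : ℕ) : ℤ)) ((n : ℤ) - ((n / 2 : ℕ) : ℤ)) with ht
  have hto : t o = {1} := by simp [ht]
  have htn : ∀ i, i ≠ o → t i = nodes n := fun i hi => by simp [ht, hi, nodes]
  -- the coefficients must be bounded off the index box as well, so the weights vanish there
  let w : Fin d → ℤ → ℝ := fun i z =>
    if i = o then 1 else if z ∈ nodes n then lagrangeCoeff n z (α i) else 0
  have hw : ∀ i z, |w i z| ≤ ((n : ℝ) / 2 + 1) ^ 2 := by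
    intro i z
    have h1 : (1 : ℝ) ≤ (n : ℝ) / 2 + 1 := by
      have : (0 : ℝ) ≤ n := n.cast_nonneg
      linarith
    simp only [w]
    split_ifs with h2 h3
    · rw [abs_one]; exact one_le_pow₀ h1
    · exact abs_lagrangeCoeff_le n z h3 _
    · rw [abs_zero]; positivity
  have hM : 0 < Nat.multinomial Finset.univ α := Nat.multinomial_pos _ _
  set M : ℝ := (Nat.multinomial Finset.univ α : ℝ) with hMdef
  have hM1 : (1 : ℝ) ≤ M := by rw [hMdef]; exact_mod_cast hM
  have key : ∀ β : Fin d → ℕ, ∑ i, β i = n →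
      ∑ ν ∈ Fintype.piFinset t, ∏ i, (w i (ν i) * (ν i : ℝ) ^ β i) = if β = α then 1 else 0 := by
    intro β hβ
    rw [← Finset.prod_univ_sum t (fun i z => w i z * (z : ℝ) ^ β i)]
    have hf : ∀ i, ∑ z ∈ t i, w i z * (z : ℝ) ^ β i =
        if i = o then 1 else if β i = α i then 1 else 0 := by
      intro i
      by_cases hi : i = o
      · subst hi; rw [hto]; simp [w]
      · rw [htn i hi, if_neg hi, ← sum_lagrangeCoeff_mul_pow n (β i) (α i)
          (hβ ▸ Finset.single_le_sum (fun _ _ => Nat.zero_le _) (Finset.mem_univ i))]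
        refine Finset.sum_congr rfl fun z hz => ?_
        simp [w, hi, hz]
    simp only [hf]
    split_ifs with hβα
    · subst hβα
      simp
    · -- the exponent at `o` is determined by the others, so `β` and `α` differ elsewhere
      obtain ⟨i, hi, hne⟩ : ∃ i, i ≠ o ∧ β i ≠ α i := by
        by_contra! hcon
        apply hβα
        have h1 := Finset.add_sum_erase Finset.univ β (Finset.mem_univ o)
        have h2 := Finset.add_sum_erase Finset.univ α (Finset.mem_univ o)
        have h3 : ∑ i ∈ Finset.univ.erase o, β i = ∑ i ∈ Finset.univ.erase o, α i :=
          Finset.sum_congr rfl fun i hi => hcon i (Finset.ne_of_mem_erase hi)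
        funext i
        by_cases hi : i = o
        · subst hi; omega
        · exact hcon i hi
      exact Finset.prod_eq_zero (Finset.mem_univ i) (by simp [hi, hne])
  refine ⟨fun ν => M⁻¹ * ∏ i, w i (ν i), fun ν => ?_, fun x => ?_⟩
  · rw [abs_mul, Finset.abs_prod, abs_of_nonneg (by positivity)]
    calc M⁻¹ * ∏ i, |w i (ν i)| ≤ 1 * ∏ _i : Fin d, ((n : ℝ) / 2 + 1) ^ 2 := by
          refine mul_le_mul (inv_le_one_of_one_le₀ hM1) ?_
            (Finset.prod_nonneg fun _ _ => abs_nonneg _) zero_le_one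
          exact Finset.prod_le_prod (fun _ _ => abs_nonneg _) fun i _ => hw i (ν i)
      _ = _ := by simp [pow_mul]
  · symm
    calc ∑ ν ∈ Fintype.piFinset t, M⁻¹ * (∏ i, w i (ν i)) * (∑ i, (ν i : ℝ) * x i) ^ n
        = ∑ ν ∈ Fintype.piFinset t, ∑ β ∈ Finset.piAntidiag Finset.univ n,
            M⁻¹ * (Nat.multinomial Finset.univ β : ℝ) * (∏ i, x i ^ β i) *
              ∏ i, (w i (ν i) * (ν i : ℝ) ^ β i) := by
          refine Finset.sum_congr rfl fun ν _ => ?_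
          rw [Finset.sum_pow_eq_sum_piAntidiag, Finset.mul_sum]
          refine Finset.sum_congr rfl fun β _ => ?_
          simp only [mul_pow, Finset.prod_mul_distrib]
          ring
      _ = ∑ β ∈ Finset.piAntidiag Finset.univ n,
            M⁻¹ * (Nat.multinomial Finset.univ β : ℝ) * (∏ i, x i ^ β i) *
              if β = α then 1 else 0 := by
          rw [Finset.sum_comm]
          refine Finset.sum_congr rfl fun β hβ => ?_
          rw [← Finset.mul_sum, key β (Finset.mem_piAntidiag.1 hβ).1]
      _ = M⁻¹ * M * ∏ i, x i ^ α i := by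
          simp only [mul_ite, mul_one, mul_zero]
          rw [Finset.sum_ite_eq', if_pos (by simp [hα])]
      _ = ∏ i, x i ^ α i := by
          rw [inv_mul_cancel₀ (by positivity), one_mul]
end

section
/- Let n be a positive integer and let j be an integer with 0 ≤ j ≤ n. Then there exist real numbers b₀, b₁, …, b_n with |b_s| ≤ (n/2 + 1)² for every s, such that for all ξ, y ∈ ℝ, Σ_{s=0}^{n} b_s (ξ + (s − ⌊n/2⌋) y)ⁿ = ξʲ y^{n−j}. -/
/-!
Write `x_s = s - ⌊n/2⌋`, `k = n - j`, and let `L_s` be the Lagrange basis polynomials for the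
nodes `x_0, …, x_n`. Since `∑ s, x_s ^ i • L_s = X ^ i` for `i ≤ n`, comparing coefficients of
`X ^ k` shows that `b_s = [X ^ k] L_s / n.choose k` satisfies
`n.choose i * ∑ s, b_s * x_s ^ i = δ_{ik}`, which by the binomial theorem is the claimed identity.

In fact `|b_s| ≤ 1`. The coefficient of `X ^ k` in `∏_{t ≠ s} (X - x_t)` is, up to sign, a sum of
`n.choose k` products of nodes, each at most `∏_t max 1 |x_t| = ⌊n/2⌋! (n - ⌊n/2⌋)!`, while the
denominator of `L_s` is `± s! (n - s)!`. The former is at most the latter because the central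
binomial coefficient is the largest.
-/

open Polynomial in
/-- Coefficient bound for the numerators of Lagrange basis polynomials, normalised by their
denominators: every elementary symmetric function of the `|v t|` is at most the number of its
terms times `∏ max 1 |v t|`. The bound also holds when `v t = x`, where both sides vanish by the
convention `0⁻¹ = 0`. -/
lemma abs_coeff_prod_basisDivisor_le (S : Finset ℕ) (v : ℕ → ℝ) (x : ℝ) (k : ℕ) :
    |(∏ t ∈ S, Lagrange.basisDivisor x (v t)).coeff k| ≤
      (S.card.choose k : ℝ) * ∏ t ∈ S, (|x - v t|⁻¹ * max 1 |v t|) := by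
  induction S using Finset.induction_on generalizing k with
  | empty =>
    cases k <;> simp [coeff_one]
  | insert a S ha ih =>
    rw [Finset.prod_insert ha, Finset.prod_insert ha, Finset.card_insert_of_notMem ha]
    set Q := ∏ t ∈ S, Lagrange.basisDivisor x (v t)
    set A := ∏ t ∈ S, (|x - v t|⁻¹ * max 1 |v t|)
    have hA : 0 ≤ A := Finset.prod_nonneg fun t _ => by positivity
    have hm1 : 1 ≤ max 1 |v a| := le_max_left _ _
    have hm2 : |v a| ≤ max 1 |v a| := le_max_right _ _
    have hi : 0 ≤ |x - v a|⁻¹ := by positivity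
    rw [Lagrange.basisDivisor, mul_assoc, coeff_C_mul, abs_mul, abs_inv]
    suffices h : |((X - C (v a)) * Q).coeff k| ≤
        ((S.card + 1).choose k : ℝ) * (max 1 |v a| * A) by
      calc _ ≤ |x - v a|⁻¹ * (((S.card + 1).choose k : ℝ) * (max 1 |v a| * A)) := by gcongr
        _ = _ := by ring
    rw [sub_mul, coeff_sub, coeff_C_mul]
    cases k with
    | zero =>
      have h0 := ih 0
      simp only [Nat.choose_zero_right, Nat.cast_one, one_mul] at h0 ⊢
      rw [coeff_X_mul_zero, zero_sub, abs_neg, abs_mul]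
      gcongr
    | succ k =>
      rw [coeff_X_mul, Nat.choose_succ_succ]
      push_cast
      calc _ ≤ |Q.coeff k| + |v a * Q.coeff (k + 1)| := abs_sub _ _
        _ = 1 * |Q.coeff k| + |v a| * |Q.coeff (k + 1)| := by rw [abs_mul, one_mul]
        _ ≤ max 1 |v a| * ((S.card.choose k : ℝ) * A) +
            max 1 |v a| * ((S.card.choose (k + 1) : ℝ) * A) := by
          gcongr
          · exact ih k
          · exact ih (k + 1)
        _ = _ := by ring

lemma prod_range_max_one_abs_sub (s d : ℕ) :
    ∏ t ∈ Finset.range (s + d + 1), max 1 |(s : ℝ) - t| = (s.factorial : ℝ) * d.factorial := by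
  induction d with
  | zero =>
    induction s with
    | zero => simp
    | succ s ih =>
      rw [Finset.prod_range_succ', Nat.factorial_succ]
      simp only [Nat.cast_add, Nat.cast_one, add_sub_add_right_eq_sub, add_zero] at ih ⊢
      rw [ih]
      have h : max 1 |(s : ℝ) + 1 - (0 : ℕ)| = s + 1 := by
        rw [Nat.cast_zero, sub_zero, abs_of_nonneg (by positivity)]
        exact max_eq_right (by simp)
      rw [h]
      push_cast
      ring
  | succ d ih =>
    rw [← add_assoc, Finset.prod_range_succ, ih, Nat.factorial_succ]
    have h : max 1 |(s : ℝ) - ((s + d + 1 : ℕ) : ℝ)| = d + 1 := by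
      have : (s : ℝ) - ((s + d + 1 : ℕ) : ℝ) = -(d + 1) := by push_cast; ring
      rw [this, abs_neg, abs_of_nonneg (by positivity)]
      exact max_eq_right (by simp)
    rw [h]
    push_cast
    ring

lemma factorial_half_mul_le (n s : ℕ) (hs : s ≤ n) :
    (n / 2).factorial * (n - n / 2).factorial ≤ s.factorial * (n - s).factorial := by
  have h1 := Nat.choose_mul_factorial_mul_factorial hs
  have h2 := Nat.choose_mul_factorial_mul_factorial (Nat.div_le_self n 2)
  have h3 := Nat.choose_le_middle s n
  rw [mul_assoc] at h1 h2
  refine Nat.le_of_mul_le_mul_left ?_ (Nat.choose_pos (Nat.div_le_self n 2))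
  rw [h2, ← h1]
  exact Nat.mul_le_mul_right _ h3

/-- The products of the clipped nodes `max 1 |x_t|`, `t ≠ s`, are dominated by the denominator
of the `s`-th Lagrange basis polynomial. -/
lemma prod_erase_node_ratio_le_one (n s : ℕ) (hs : s ≤ n) :
    ∏ t ∈ (Finset.range (n + 1)).erase s,
      (|((s : ℝ) - (n / 2 : ℕ)) - ((t : ℝ) - (n / 2 : ℕ))|⁻¹ *
        max 1 |(t : ℝ) - (n / 2 : ℕ)|) ≤ 1 := by
  have hmem : s ∈ Finset.range (n + 1) := by simp; omega
  have key : ∀ m ≤ n, ∏ t ∈ Finset.range (n + 1), max 1 |(m : ℝ) - t| =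
      (m.factorial : ℝ) * (n - m).factorial := fun m hm => by
    have := prod_range_max_one_abs_sub m (n - m)
    rwa [Nat.add_sub_cancel' hm] at this
  have hden : ∏ t ∈ (Finset.range (n + 1)).erase s, |(s : ℝ) - t| =
      (s.factorial : ℝ) * (n - s).factorial := by
    rw [← key s hs, ← Finset.mul_prod_erase _ _ hmem, sub_self, abs_zero,
      max_eq_left zero_le_one, one_mul]
    refine Finset.prod_congr rfl fun t ht => (max_eq_right ?_).symm
    have hne : (s : ℤ) - t ≠ 0 := by
      have := Finset.ne_of_mem_erase ht
      omega
    exact_mod_cast Int.one_le_abs hne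
  have hnum : ∏ t ∈ (Finset.range (n + 1)).erase s, max 1 |(t : ℝ) - (n / 2 : ℕ)| ≤
      ((n / 2).factorial : ℝ) * (n - n / 2).factorial := by
    rw [← key _ (Nat.div_le_self n 2)]
    simp_rw [abs_sub_comm (_ : ℝ) ((n / 2 : ℕ) : ℝ)]
    rw [← Finset.mul_prod_erase _ _ hmem]
    exact le_mul_of_one_le_left (Finset.prod_nonneg fun _ _ => by positivity) (le_max_left _ _)
  simp_rw [sub_sub_sub_cancel_right]
  rw [Finset.prod_mul_distrib, Finset.prod_inv_distrib, hden, inv_mul_le_iff₀ (by positivity),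
    mul_one]
  exact hnum.trans (by exact_mod_cast factorial_half_mul_le n s hs)

/-- Lagrange interpolation of `X ^ i` at the nodes `v`, read off at the coefficient of `X ^ k`. -/
lemma sum_coeff_basis_mul_pow (n i k : ℕ) (hi : i ≤ n) (v : ℕ → ℝ) (hv : Function.Injective v) :
    ∑ s ∈ Finset.range (n + 1), (Lagrange.basis (Finset.range (n + 1)) v s).coeff k * v s ^ i =
      if k = i then 1 else 0 := by
  have h := Lagrange.eq_interpolate (s := Finset.range (n + 1)) (v := v)
    (f := (Polynomial.X : Polynomial ℝ) ^ i) hv.injOn (by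
      rw [Polynomial.degree_X_pow, Finset.card_range]
      exact_mod_cast Nat.lt_succ_of_le hi)
  have h2 := congrArg (fun p => Polynomial.coeff p k) h
  simp only [Lagrange.interpolate_apply, Polynomial.finsetSum_coeff, Polynomial.coeff_C_mul,
    Polynomial.coeff_X_pow, Polynomial.eval_pow, Polynomial.eval_X] at h2
  rw [h2]
  exact Finset.sum_congr rfl fun _ _ => mul_comm _ _

/-- for a positive integer `n` and `0 ≤ j ≤ n`, there are real numbers
`b₀, …, b_n` with `|b_s| ≤ (n/2 + 1)²` such that for all `ξ, y ∈ ℝ`,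
`Σ_{s=0}^n b_s (ξ + (s − ⌊n/2⌋) y)^n = ξ^j y^{n−j}`. -/
theorem monomial_two_var_representation (n : ℕ) (hn : 0 < n) (j : ℕ) (hj : j ≤ n) :
    ∃ b : Fin (n + 1) → ℝ,
      (∀ s, |b s| ≤ ((n : ℝ) / 2 + 1) ^ 2) ∧
      ∀ ξ y : ℝ,
        ∑ s : Fin (n + 1), b s * (ξ + (((s : ℕ) : ℝ) - ((n / 2 : ℕ) : ℝ)) * y) ^ n
          = ξ ^ j * y ^ (n - j) := by
  set v : ℕ → ℝ := fun s => (s : ℝ) - ((n / 2 : ℕ) : ℝ) with hvdef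
  have hv : Function.Injective v := fun a b h => by simpa [hvdef] using h
  have hc : (0 : ℝ) < n.choose (n - j) := by
    exact_mod_cast Nat.choose_pos (Nat.sub_le n j)
  set c : ℕ → ℝ := fun s => (Lagrange.basis (Finset.range (n + 1)) v s).coeff (n - j) with hcdef
  -- The bound `(n / 2 + 1) ^ 2` is generous: these coefficients are at most `1` in absolute value.
  refine ⟨fun s => c s / n.choose (n - j), fun s => ?_, fun ξ y => ?_⟩
  · have hs : (s : ℕ) ≤ n := Nat.lt_succ_iff.mp s.2
    have h1 := abs_coeff_prod_basisDivisor_le ((Finset.range (n + 1)).erase s) v (v s) (n - j)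
    rw [Finset.card_erase_of_mem (Finset.mem_range.mpr s.2), Finset.card_range, Nat.add_sub_cancel] at h1
    have h2 := prod_erase_node_ratio_le_one n s hs
    have h3 : |c s / n.choose (n - j)| ≤ 1 := by
      rw [abs_div, abs_of_pos hc, div_le_one hc]
      exact h1.trans (mul_le_of_le_one_right hc.le h2)
    have hn0 : (0 : ℝ) ≤ n := by positivity
    exact h3.trans (by nlinarith)
  · rw [Fin.sum_univ_eq_sum_range
      (fun s => c s / n.choose (n - j) * (ξ + ((s : ℝ) - ((n / 2 : ℕ) : ℝ)) * y) ^ n) (n + 1)]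
    calc _ = ∑ s ∈ Finset.range (n + 1), ∑ i ∈ Finset.range (n + 1),
          ξ ^ i * y ^ (n - i) * n.choose i / n.choose (n - j) * (c s * v s ^ (n - i)) := by
          refine Finset.sum_congr rfl fun s _ => ?_
          rw [add_pow, Finset.mul_sum]
          refine Finset.sum_congr rfl fun i _ => ?_
          rw [mul_pow]
          ring
      _ = ∑ i ∈ Finset.range (n + 1), if i = j then ξ ^ j * y ^ (n - j) else 0 := by
          rw [Finset.sum_comm]
          refine Finset.sum_congr rfl fun i hi => ?_
          have hi' : i ≤ n := Nat.lt_succ_iff.mp (Finset.mem_range.mp hi)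
          rw [← Finset.mul_sum, sum_coeff_basis_mul_pow n (n - i) (n - j) (Nat.sub_le _ _) v hv]
          by_cases hij : i = j
          · subst hij
            rw [Nat.choose_symm hi'] at hc ⊢
            simp only [if_true, mul_one]
            field_simp
          · rw [if_neg (by omega), if_neg hij, mul_zero]
      _ = _ := by
          rw [Finset.sum_ite_eq', if_pos (Finset.mem_range.mpr (by omega))]
end

section
/- Let n be a nonnegative integer and let B_n be the (n+1)×(n+1) real matrix whose entry in row i and column j (for i, j = 0, 1, …, n) is binom(n, j)·(i − ⌊n/2⌋)ʲ. Then B_n is invertible and every entry of B_n⁻¹ has absolute value at most (n/2 + 1)². -/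
/-!
The nodes are `x_i = i - m` with `m = ⌊n/2⌋`. The inverse is obtained from Lagrange interpolation:
its `(j, k)` entry is the `j`-th coefficient of the `k`-th Lagrange basis polynomial `L_k`, divided
by `binom(n, j)`.

To bound it, say that `p` is dominated by `(c, d)` when `|p_j| ≤ c * binom(d, j)` for all `j`. By
the Chu–Vandermonde identity domination is multiplicative (`Dominated.mul`). A linear factor
`(X - y) / (x - y)` is dominated by `(max 1 |y| / |x - y|, 1)`, so `L_k` is dominated by
`(∏_{j ≠ k} max 1 |x_j| / |x_k - x_j|, n)`. Up to a factor `max 1 |x_k| ≥ 1`, this constant is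
`m! (n - m)! / (k! (n - k)!) = binom(n, k) / binom(n, m)`, which is at most `1` because the central
binomial coefficient is the largest one (`prod_node_le`). Hence the entries of the inverse are even
bounded by `1`.
-/

open Polynomial

/-- The coefficients of `p` are bounded in absolute value by those of `c * (1 + X) ^ d`. -/
def Dominated (p : ℝ[X]) (c : ℝ) (d : ℕ) : Prop :=
  ∀ j, |p.coeff j| ≤ c * (d.choose j : ℝ)

lemma Dominated.mul {p q : ℝ[X]} {c c' : ℝ} {d d' : ℕ} (hp : Dominated p c d)
    (hq : Dominated q c' d') : Dominated (p * q) (c * c') (d + d') := by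
  intro j
  rw [coeff_mul, Nat.add_choose_eq]
  push_cast
  rw [Finset.mul_sum]
  refine (Finset.abs_sum_le_sum_abs _ _).trans (Finset.sum_le_sum fun x _ => ?_)
  rw [abs_mul]
  calc |p.coeff x.1| * |q.coeff x.2|
      ≤ (c * (d.choose x.1 : ℝ)) * (c' * (d'.choose x.2 : ℝ)) :=
        mul_le_mul (hp _) (hq _) (abs_nonneg _) ((abs_nonneg _).trans (hp _))
    _ = _ := by ring

lemma Dominated.prod {ι : Type*} (s : Finset ι) (p : ι → ℝ[X]) (c : ι → ℝ)
    (h : ∀ i ∈ s, Dominated (p i) (c i) 1) :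
    Dominated (∏ i ∈ s, p i) (∏ i ∈ s, c i) s.card := by
  classical
  induction s using Finset.induction_on with
  | empty =>
    intro j
    rcases j with _ | j <;> simp [coeff_one]
  | insert a s ha ih =>
    rw [Finset.prod_insert ha, Finset.prod_insert ha, Finset.card_insert_of_notMem ha, add_comm]
    exact (h a (Finset.mem_insert_self _ _)).mul
      (ih fun i hi => h i (Finset.mem_insert_of_mem hi))

lemma dominated_basisDivisor (x y : ℝ) :
    Dominated (Lagrange.basisDivisor x y) (max 1 |y| / |x - y|) 1 := by
  intro j
  have h0 : 0 ≤ |x - y|⁻¹ := by positivity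
  rw [Lagrange.basisDivisor, coeff_C_mul, abs_mul, abs_inv, div_eq_inv_mul, mul_assoc]
  refine mul_le_mul_of_nonneg_left ?_ h0
  rcases j with _ | _ | j
  · simp
  · simp [coeff_X]
  · simp [coeff_X]

/-- The factor with `j = k`, which would vanish, is turned into `1` by the maximum. -/
lemma prod_max_one_abs_sub (k d : ℕ) :
    ∏ j ∈ Finset.range (k + d + 1), max 1 |(j : ℝ) - k| = (k.factorial : ℝ) * d.factorial := by
  induction d with
  | zero =>
    rw [add_zero, Finset.prod_range_succ, ← Finset.prod_range_reflect,
      ← Finset.prod_range_add_one_eq_factorial]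
    push_cast
    simp only [sub_self, abs_zero, Nat.factorial_zero, Nat.cast_one, mul_one]
    rw [max_eq_left zero_le_one, mul_one]
    refine Finset.prod_congr rfl fun j hj => ?_
    obtain ⟨e, rfl⟩ : ∃ e, k = e + j + 1 :=
      ⟨k - j - 1, by have := Finset.mem_range.1 hj; omega⟩
    have h : e + j + 1 - 1 - j = e := by omega
    rw [h]
    push_cast
    rw [show (e : ℝ) - (e + j + 1) = -(j + 1) by ring, abs_neg, abs_of_nonneg (by positivity),
      max_eq_right (by linarith [Nat.cast_nonneg (α := ℝ) j])]
  | succ d ih =>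
    rw [← add_assoc, Finset.prod_range_succ, ih, Nat.factorial_succ]
    push_cast
    rw [show (k : ℝ) + d + 1 - k = d + 1 by ring, abs_of_nonneg (by positivity),
      max_eq_right (by linarith [Nat.cast_nonneg (α := ℝ) d])]
    ring

/-- The central binomial coefficient is the largest one, in terms of products over all nodes. -/
lemma prod_node_le (n k : ℕ) (hk : k ≤ n) :
    ∏ j ∈ Finset.range (n + 1), max 1 |(j : ℝ) - ((n / 2 : ℕ) : ℝ)| ≤
      ∏ j ∈ Finset.range (n + 1), max 1 |(j : ℝ) - k| := by
  have hm : n / 2 ≤ n := Nat.div_le_self _ _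
  have h1 := prod_max_one_abs_sub k (n - k)
  have h2 := prod_max_one_abs_sub (n / 2) (n - n / 2)
  rw [Nat.add_sub_cancel' hk] at h1
  rw [Nat.add_sub_cancel' hm] at h2
  rw [h1, h2]
  norm_cast
  have e1 := Nat.choose_mul_factorial_mul_factorial hk
  have e2 := Nat.choose_mul_factorial_mul_factorial hm
  have hc := Nat.choose_le_middle k n
  refine Nat.le_of_mul_le_mul_left ?_ (Nat.choose_pos hm)
  rw [← mul_assoc, e2, ← e1, mul_assoc]
  exact Nat.mul_le_mul_right _ hc

lemma prod_erase_node_div_le_one (n : ℕ) (k : Fin (n + 1)) :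
    ∏ j ∈ Finset.univ.erase k, (max 1 |((j : ℕ) : ℝ) - ((n / 2 : ℕ) : ℝ)| /
      |(((k : ℕ) : ℝ) - ((n / 2 : ℕ) : ℝ)) - (((j : ℕ) : ℝ) - ((n / 2 : ℕ) : ℝ))|) ≤ 1 := by
  have hle := prod_node_le n k (Nat.lt_succ_iff.1 k.2)
  rw [← Fin.prod_univ_eq_prod_range (fun j : ℕ => max 1 |(j : ℝ) - ((n / 2 : ℕ) : ℝ)|),
    ← Fin.prod_univ_eq_prod_range (fun j : ℕ => max 1 |(j : ℝ) - ((k : ℕ) : ℝ)|),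
    ← Finset.mul_prod_erase _ _ (Finset.mem_univ k),
    ← Finset.mul_prod_erase _ (fun j : Fin (n + 1) => max 1 |((j : ℕ) : ℝ) - ((k : ℕ) : ℝ)|)
      (Finset.mem_univ k), sub_self, abs_zero, max_eq_left zero_le_one, one_mul] at hle
  have hdist : ∀ j ∈ Finset.univ.erase k, max 1 |((j : ℕ) : ℝ) - ((k : ℕ) : ℝ)| =
      |(((k : ℕ) : ℝ) - ((n / 2 : ℕ) : ℝ)) - (((j : ℕ) : ℝ) - ((n / 2 : ℕ) : ℝ))| := by
    intro j hj
    have hne : ((j : ℕ) : ℤ) - ((k : ℕ) : ℤ) ≠ 0 := by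
      have := Fin.val_ne_of_ne (Finset.ne_of_mem_erase hj)
      omega
    have h1 : (1 : ℝ) ≤ |((j : ℕ) : ℝ) - ((k : ℕ) : ℝ)| := by
      exact_mod_cast Int.one_le_abs hne
    rw [max_eq_right h1, sub_sub_sub_cancel_right, abs_sub_comm]
  rw [Finset.prod_div_distrib, ← Finset.prod_congr rfl hdist]
  refine div_le_one_of_le₀ ?_ (Finset.prod_nonneg fun j _ => by positivity)
  exact (le_mul_of_one_le_left (Finset.prod_nonneg fun j _ => by positivity)
    (le_max_left _ _)).trans hle

/-- let `B_n` be the `(n+1)×(n+1)` matrix with entries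
`(B_n)_{ij} = binom(n,j) (i − ⌊n/2⌋)^j` for `i, j = 0, …, n`. Then `B_n` is invertible
and every entry of `B_n⁻¹` is bounded in absolute value by `(n/2 + 1)²`. -/
theorem binom_vandermonde_invertible_and_bounded (n : ℕ)
    (B : Matrix (Fin (n + 1)) (Fin (n + 1)) ℝ)
    (hB : ∀ i j : Fin (n + 1),
      B i j = (n.choose j : ℝ) * (((i : ℕ) : ℝ) - ((n / 2 : ℕ) : ℝ)) ^ (j : ℕ)) :
    IsUnit B ∧ ∀ i j : Fin (n + 1), |B⁻¹ i j| ≤ ((n : ℝ) / 2 + 1) ^ 2 := by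
  let v : Fin (n + 1) → ℝ := fun i => ((i : ℕ) : ℝ) - ((n / 2 : ℕ) : ℝ)
  have hv : Function.Injective v := fun i j h => by
    have h' : ((i : ℕ) : ℝ) = ((j : ℕ) : ℝ) := sub_left_injective h
    exact Fin.ext (by exact_mod_cast h')
  let L : Fin (n + 1) → ℝ[X] := fun k => Lagrange.basis Finset.univ v k
  let A : Matrix (Fin (n + 1)) (Fin (n + 1)) ℝ :=
    Matrix.of fun j k => (L k).coeff j / (n.choose j : ℝ)
  have hpos : ∀ j : Fin (n + 1), (0 : ℝ) < (n.choose j : ℝ) := fun j => by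
    exact_mod_cast Nat.choose_pos (Nat.lt_succ_iff.1 j.2)
  have hdeg : ∀ k, (L k).natDegree < n + 1 := fun k => by
    have h := Lagrange.natDegree_basis (s := Finset.univ) (v := v) hv.injOn (Finset.mem_univ k)
    simp only [L, h, Finset.card_univ, Fintype.card_fin]
    omega
  -- The `(i, k)` entry of `B * A` is the value of `L k` at the node `v i`.
  have hBA : B * A = 1 := by
    ext i k
    have h : (B * A) i k = (L k).eval (v i) := by
      rw [Matrix.mul_apply, eval_eq_sum_range' (hdeg k),
        ← Fin.sum_univ_eq_sum_range (fun j : ℕ => (L k).coeff j * v i ^ j)]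
      refine Finset.sum_congr rfl fun j _ => ?_
      have := (hpos j).ne'
      simp only [hB, A, Matrix.of_apply, v]
      field_simp
    rw [h, Matrix.one_apply]
    split_ifs with hik
    · subst hik
      exact Lagrange.eval_basis_self hv.injOn (Finset.mem_univ _)
    · exact Lagrange.eval_basis_of_ne (fun h => hik h.symm) (Finset.mem_univ _)
  refine ⟨IsUnit.of_mul_eq_one A hBA, fun j k => ?_⟩
  rw [Matrix.inv_eq_right_inv hBA]
  have hdom : Dominated (L k) _ _ := Dominated.prod (Finset.univ.erase k) _ _
    fun i _ => dominated_basisDivisor (v k) (v i)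
  have hj := hdom j
  rw [Finset.card_erase_of_mem (Finset.mem_univ k), Finset.card_univ, Fintype.card_fin,
    Nat.add_sub_cancel] at hj
  have h1 : |A j k| ≤ 1 := by
    simp only [A, Matrix.of_apply]
    rw [abs_div, abs_of_pos (hpos j), div_le_one (hpos j)]
    exact hj.trans (mul_le_of_le_one_left (hpos j).le (prod_erase_node_div_le_one n k))
  have hn : (0 : ℝ) ≤ n := Nat.cast_nonneg n
  nlinarith
end

section
/- Let d, k be positive integers with k ≥ 2, let N = 2(k+1)ᵈ, and let B > 0. Then for any polynomial P(x) = Σ_{α ∈ ℕᵈ, ‖α‖₁ ≤ k} a_α x^α of degree at most k on the unit ball 𝔹ᵈ of ℝᵈ, there exist A ∈ ℝ^{N×d}, b ∈ ℝᴺ, c ∈ ℝᴺ with every entry of A and b bounded in absolute value by B and ‖c‖_∞ ≤ M := B⁻ᵏ (k/2 + 1)^{2(d+1)+k} · (Σ_{‖α‖₁ ≤ k} |a_α|), such that P(x) = c · σ_k(Ax + b) for all x ∈ 𝔹ᵈ. -/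
/-! The theorem holds because the ridge powers `(t_J · x + 1)^k`, with `t_J` running over a tensor
grid of `(k+1)^d` points of `[-1,1]^d`, span all polynomials of degree at most `k`.

By the multinomial theorem, `(t · x + 1)^k = ∑_{|β| ≤ k} M_β t^β x^β` with multinomial
coefficients `M_β ≥ 1` (`one_add_sum_pow`). If `L j m` is the coefficient of `X^m` in the `j`-th
Lagrange basis polynomial of the one-dimensional grid, then `∑_j t_j^n L j m = δ_{nm}` for
`n ≤ k`, so the weights `∏ i, L (J i) (α i)` on the grid extract the coefficient of `x^α`
(`sum_grid_prod`). The polynomial is therefore a combination of the ridge powers with weights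
`∑_α a_α / M_α * ∏ i, L (J i) (α i)`.

For the size of the weights, take `p = ⌊k/2⌋`, `q = ⌈k/2⌉` and the nodes `(j - p) / q`,
`0 ≤ j ≤ k`. Before the rescaling by `q`, the coefficients of the `j`-th Lagrange polynomial are at
most `∏_{m ≠ j} (1 + |m - p|) / |j - m| ≤ (p+1)! (q+1)! / (j! (k-j)!) ≤ (p+1) (q+1)`, which is at
most `(k/2+1)^2`; the middle binomial coefficient being the largest gives the second inequality.
Rescaling multiplies the coefficient of `X^m` by `q^m ≤ (k/2+1)^m`, so
`|L j m| ≤ (k/2+1)^(m+2)` (`exists_nodes`), and a product over `d` coordinates with `|α| ≤ k` is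
at most `(k/2+1)^(2d+k)`.

Finally `y^k = σ_k(y) + (-1)^k σ_k(-y)` turns each ridge power into two neurons, and scaling the
inner weights by `B` costs the factor `B^{-k}`. -/

/-- The ReLU^k activation function: `σ_k(x) = x^k` for `x ≥ 0` and `0` for `x < 0`. -/
noncomputable def relupow (k : ℕ) (x : ℝ) : ℝ := if 0 ≤ x then x ^ k else 0

/-- The finite set of multi-indices `α ∈ ℕᵈ` with `‖α‖₁ = α₁ + ⋯ + α_d ≤ k`. -/
def degLE (d k : ℕ) : Finset (Fin d → ℕ) :=
  (Fintype.piFinset fun _ : Fin d => Finset.range (k + 1)).filter fun α => ∑ i, α i ≤ k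

/-! ### Coefficients of Lagrange polynomials on an equispaced grid -/

/-- By induction: the largest absolute value of a coefficient of `u (X - s) P` is at most
`|u| (1 + |s|)` times that of `P`. -/
lemma abs_coeff_prod_le (S : Finset ℕ) (u s : ℕ → ℝ) (n : ℕ) :
    |(∏ m ∈ S, (Polynomial.C (u m) * (Polynomial.X - Polynomial.C (s m)))).coeff n| ≤
      ∏ m ∈ S, (|u m| * (1 + |s m|)) := by
  classical
  induction S using Finset.induction_on generalizing n with
  | empty =>
    simp only [Finset.prod_empty, Polynomial.coeff_one]
    split_ifs <;> simp
  | insert j S hj ih =>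
    rw [Finset.prod_insert hj, Finset.prod_insert hj, mul_assoc, Polynomial.coeff_C_mul, sub_mul,
      Polynomial.coeff_sub, Polynomial.coeff_C_mul, abs_mul, mul_assoc]
    refine mul_le_mul_of_nonneg_left ?_ (abs_nonneg _)
    set Q := ∏ m ∈ S, (Polynomial.C (u m) * (Polynomial.X - Polynomial.C (s m))) with hQ
    have h1 : |(Polynomial.X * Q).coeff n| ≤ ∏ m ∈ S, (|u m| * (1 + |s m|)) := by
      cases n with
      | zero =>
        simp only [Polynomial.mul_coeff_zero, Polynomial.coeff_X_zero, zero_mul, abs_zero]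
        positivity
      | succ n => rw [Polynomial.coeff_X_mul]; exact ih n
    calc _ ≤ |(Polynomial.X * Q).coeff n| + |s j * Q.coeff n| := abs_sub _ _
      _ ≤ _ := by
        rw [abs_mul, add_mul, one_mul]
        exact add_le_add h1 (mul_le_mul_of_nonneg_left (ih n) (abs_nonneg _))

lemma prod_abs_sub_range (j : ℕ) :
    ∏ m ∈ Finset.range j, |(j : ℝ) - m| = (j.factorial : ℝ) := by
  rw [← Finset.prod_range_reflect, ← Finset.prod_range_add_one_eq_factorial]
  push_cast
  refine Finset.prod_congr rfl fun m hm => ?_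
  have hm := Finset.mem_range.1 hm
  have : j - 1 - m + (m + 1) = j := by omega
  have h2 : (j : ℝ) = ((j - 1 - m : ℕ) : ℝ) + (m + 1) := by exact_mod_cast this.symm
  rw [show (j : ℝ) - ((j - 1 - m : ℕ) : ℝ) = m + 1 by linarith]
  exact abs_of_nonneg (by positivity)

/-- The denominator of the `j`-th Lagrange polynomial with nodes `0, …, k`, up to sign. -/
lemma prod_abs_sub_erase (k j : ℕ) (hj : j ≤ k) :
    ∏ m ∈ (Finset.range (k + 1)).erase j, |(j : ℝ) - m| =
      (j.factorial : ℝ) * ((k - j).factorial : ℝ) := by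
  obtain ⟨r, rfl⟩ := Nat.exists_eq_add_of_le hj
  rw [Nat.add_sub_cancel_left]
  have h : (Finset.range (j + r + 1)).erase j =
      Finset.range j ∪ (Finset.range r).image (fun x => j + 1 + x) := by
    ext m
    simp only [Finset.mem_erase, Finset.mem_range, Finset.mem_union, Finset.mem_image]
    constructor
    · rintro ⟨h1, h2⟩
      rcases lt_or_gt_of_ne h1 with h | h
      · exact Or.inl h
      · exact Or.inr ⟨m - (j + 1), by omega, by omega⟩
    · rintro (h | ⟨x, hx, rfl⟩) <;> omega
  rw [h, Finset.prod_union, Finset.prod_image, prod_abs_sub_range]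
  · congr 1
    rw [← Finset.prod_range_add_one_eq_factorial]
    push_cast
    refine Finset.prod_congr rfl fun m _ => ?_
    rw [abs_sub_comm, show (j : ℝ) + 1 + m - j = m + 1 by ring]
    exact abs_of_nonneg (by positivity)
  · intro x _ y _ hxy
    simpa using hxy
  · rw [Finset.disjoint_left]
    intro m hm hm'
    simp only [Finset.mem_range, Finset.mem_image] at hm hm'
    obtain ⟨x, _, rfl⟩ := hm'
    omega

lemma prod_one_add_abs_s4 (p q : ℕ) :
    ∏ m ∈ Finset.range (p + q + 1), (1 + |(m : ℝ) - p|) =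
      ((p + 1).factorial : ℝ) * ((q + 1).factorial : ℝ) := by
  rw [add_assoc, Finset.prod_range_add]
  congr 1
  · rw [← prod_abs_sub_range, Finset.prod_range_succ]
    have hlast : |((p + 1 : ℕ) : ℝ) - (p : ℕ)| = 1 := by push_cast; simp
    rw [hlast, mul_one]
    refine Finset.prod_congr rfl fun m hm => ?_
    have hm : (m : ℝ) < p := by exact_mod_cast Finset.mem_range.1 hm
    push_cast
    rw [abs_of_neg (by linarith), abs_of_pos (by linarith)]
    ring
  · rw [← Finset.prod_range_add_one_eq_factorial]
    push_cast
    refine Finset.prod_congr rfl fun m _ => ?_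
    rw [add_sub_cancel_left, abs_of_nonneg (by positivity), add_comm]

/-- The coefficients of the Lagrange polynomials with nodes `-p, …, q` are at most `(k/2+1)^2`
when `p = ⌊k/2⌋` and `p + q = k`. -/
lemma abs_coeff_basis_le (k j n : ℕ) (hj : j ≤ k) :
    |(Lagrange.basis (Finset.range (k + 1)) (fun m : ℕ => (m : ℝ) - (k / 2 : ℕ)) j).coeff n| ≤
      ((k : ℝ) / 2 + 1) ^ 2 := by
  set p := k / 2 with hp
  obtain ⟨q, hq⟩ : ∃ q, k = p + q := ⟨k - p, by omega⟩
  have hjm : j ∈ Finset.range (k + 1) := Finset.mem_range.2 (by omega)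
  have h0 : Lagrange.basis (Finset.range (k + 1)) (fun m : ℕ => (m : ℝ) - p) j =
      ∏ m ∈ (Finset.range (k + 1)).erase j, (Polynomial.C (((j : ℝ) - m)⁻¹) *
        (Polynomial.X - Polynomial.C ((m : ℝ) - p))) := by
    unfold Lagrange.basis Lagrange.basisDivisor
    refine Finset.prod_congr rfl fun m _ => ?_
    rw [sub_sub_sub_cancel_right]
  rw [h0]
  refine (abs_coeff_prod_le _ (fun m => ((j : ℝ) - m)⁻¹) (fun m => (m : ℝ) - p) n).trans ?_
  rw [Finset.prod_mul_distrib]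
  simp only [abs_inv]
  rw [Finset.prod_inv_distrib, prod_abs_sub_erase k j hj]
  have h1 : ∏ m ∈ (Finset.range (k + 1)).erase j, (1 + |(m : ℝ) - p|) ≤
      ((p + 1).factorial : ℝ) * ((q + 1).factorial : ℝ) := by
    rw [← prod_one_add_abs_s4, ← hq, ← Finset.mul_prod_erase _ _ hjm]
    refine le_mul_of_one_le_left (Finset.prod_nonneg fun m _ => by positivity) ?_
    linarith [abs_nonneg ((j : ℝ) - p)]
  -- The central binomial coefficient is the largest one.
  have h2 : (p.factorial : ℝ) * q.factorial ≤ j.factorial * (k - j).factorial := by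
    have hc : k.choose j ≤ k.choose p := Nat.choose_le_middle j k
    have e1 := Nat.choose_mul_factorial_mul_factorial hj
    have e2 := Nat.choose_mul_factorial_mul_factorial (show p ≤ k by omega)
    rw [show k - p = q by omega] at e2
    have hpos : 0 < k.choose j := Nat.choose_pos hj
    have : p.factorial * q.factorial ≤ j.factorial * (k - j).factorial := by
      refine Nat.le_of_mul_le_mul_left ?_ hpos
      calc k.choose j * (p.factorial * q.factorial)
          ≤ k.choose p * (p.factorial * q.factorial) := Nat.mul_le_mul_right _ hc
        _ = k.choose j * (j.factorial * (k - j).factorial) := by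
          rw [← mul_assoc, ← mul_assoc, e1, e2]
    exact_mod_cast this
  have hpos : (0 : ℝ) < j.factorial * (k - j).factorial := by positivity
  rw [inv_mul_le_iff₀ hpos]
  refine h1.trans ?_
  have h3 : ((p : ℝ) + 1) * (q + 1) ≤ ((k : ℝ) / 2 + 1) ^ 2 := by
    have : (k : ℝ) = p + q := by exact_mod_cast hq
    rw [this]
    nlinarith [sq_nonneg ((p : ℝ) - q)]
  rw [Nat.factorial_succ, Nat.factorial_succ]
  push_cast
  calc ((p : ℝ) + 1) * p.factorial * ((q + 1) * q.factorial)
      = (p.factorial * q.factorial) * ((p + 1) * (q + 1)) := by ring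
    _ ≤ _ := mul_le_mul h2 h3 (by positivity) (by positivity)

/-- A grid of `k + 1` points of `[-1,1]` together with weights `L j m` extracting the coefficient
of `X^m` from the values of a polynomial of degree at most `k` on the grid. -/
lemma exists_nodes (k : ℕ) (hk : 2 ≤ k) :
    ∃ (t : Fin (k + 1) → ℝ) (L : Fin (k + 1) → ℕ → ℝ),
      (∀ j, |t j| ≤ 1) ∧ (∀ j m, |L j m| ≤ ((k : ℝ) / 2 + 1) ^ (m + 2)) ∧
      ∀ n m, n ≤ k → ∑ j, L j m * t j ^ n = if n = m then 1 else 0 := by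
  set p := k / 2 with hp
  obtain ⟨q, hq⟩ : ∃ q, k = p + q := ⟨k - p, by omega⟩
  have hq0 : (0 : ℝ) < q := by exact_mod_cast (show 0 < q by omega)
  have hpq : (p : ℝ) ≤ q := by exact_mod_cast (show p ≤ q by omega)
  have hkq : (k : ℝ) = p + q := by exact_mod_cast hq
  have hqK : (q : ℝ) ≤ (k : ℝ) / 2 + 1 := by
    have : q ≤ p + 1 := by omega
    have : (q : ℝ) ≤ p + 1 := by exact_mod_cast this
    linarith
  let v : ℕ → ℝ := fun m => (m : ℝ) - p
  refine ⟨fun j => v j / q, fun j m => q ^ m *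
    (Lagrange.basis (Finset.range (k + 1)) v j).coeff m, ?_, ?_, ?_⟩
  · intro j
    have hj : ((j : ℕ) : ℝ) ≤ k := by exact_mod_cast Nat.lt_succ_iff.1 j.2
    have hj0 : (0 : ℝ) ≤ ((j : ℕ) : ℝ) := by positivity
    rw [abs_div, abs_of_pos hq0, div_le_one hq0, abs_le]
    constructor <;> simp only [v] <;> linarith
  · intro j m
    rw [abs_mul, abs_of_nonneg (by positivity : (0 : ℝ) ≤ (q : ℝ) ^ m), pow_add]
    exact mul_le_mul (pow_le_pow_left₀ hq0.le hqK m)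
      (abs_coeff_basis_le k j m (Nat.lt_succ_iff.1 j.2)) (abs_nonneg _) (by positivity)
  · intro n m hn
    have hinj : Set.InjOn v (Finset.range (k + 1)) := by
      intro x _ y _ hxy
      simpa [v] using hxy
    have hX := Lagrange.eq_interpolate (f := (Polynomial.X ^ n : Polynomial ℝ)) hinj (by
      rw [Polynomial.degree_X_pow, Finset.card_range]
      exact_mod_cast Nat.lt_succ_iff.2 hn)
    have hc := congrArg (fun P => Polynomial.coeff P m) hX
    simp only [Lagrange.interpolate_apply, Polynomial.finsetSum_coeff, Polynomial.coeff_C_mul,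
      Polynomial.coeff_X_pow, Polynomial.eval_pow, Polynomial.eval_X] at hc
    rw [Fin.sum_univ_eq_sum_range
      (fun j => q ^ m * (Lagrange.basis (Finset.range (k + 1)) v j).coeff m * (v j / q) ^ n)]
    have : ∀ j ∈ Finset.range (k + 1),
        q ^ m * (Lagrange.basis (Finset.range (k + 1)) v j).coeff m * (v j / q) ^ n =
        (q ^ m / q ^ n) * (v j ^ n * (Lagrange.basis (Finset.range (k + 1)) v j).coeff m) := by
      intro j _
      rw [div_pow]; ring
    rw [Finset.sum_congr rfl this, ← Finset.mul_sum, ← hc]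
    by_cases h : n = m
    · subst h
      simp [hq0.ne']
    · rw [if_neg h, if_neg (Ne.symm h), mul_zero]

/-! ### Polynomials as combinations of ridge powers -/

/-- The tensor-product weights extract coefficients of multivariate polynomials. -/
lemma sum_grid_prod {d k : ℕ} {t : Fin (k + 1) → ℝ} {L : Fin (k + 1) → ℕ → ℝ}
    (h : ∀ n m, n ≤ k → ∑ j, L j m * t j ^ n = if n = m then 1 else 0)
    (α β : Fin d → ℕ) (hβ : ∀ i, β i ≤ k) :
    ∑ J : Fin d → Fin (k + 1), (∏ i, L (J i) (α i)) * ∏ i, t (J i) ^ β i =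
      if β = α then 1 else 0 := by
  simp_rw [← Finset.prod_mul_distrib]
  rw [← Fintype.piFinset_univ,
    ← Finset.prod_univ_sum (fun _ => Finset.univ) (fun i j => L j (α i) * t j ^ β i)]
  simp_rw [h _ _ (hβ _)]
  split_ifs with hab
  · subst hab; simp
  · obtain ⟨i, hi⟩ := Function.ne_iff.1 hab
    exact Finset.prod_eq_zero (Finset.mem_univ i) (if_neg hi)

lemma mem_degLE {d k : ℕ} {α : Fin d → ℕ} : α ∈ degLE d k ↔ ∑ i, α i ≤ k := by
  unfold degLE
  simp only [Finset.mem_filter, Fintype.mem_piFinset, Finset.mem_range, and_iff_right_iff_imp]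
  intro h i
  exact Nat.lt_succ_iff.2 ((Finset.single_le_sum (fun _ _ => Nat.zero_le _)
    (Finset.mem_univ i)).trans h)

/-- The inhomogeneous multinomial theorem. -/
lemma one_add_sum_pow (d k : ℕ) : ∃ M : (Fin d → ℕ) → ℝ, (∀ β ∈ degLE d k, 1 ≤ M β) ∧
    ∀ y : Fin d → ℝ, (∑ i, y i + 1) ^ k = ∑ β ∈ degLE d k, M β * ∏ i, y i ^ β i := by
  refine ⟨fun β => ((Nat.multinomial Finset.univ β * k.choose (∑ i, β i) : ℕ) : ℝ), ?_, ?_⟩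
  · intro β hβ
    have h1 := Nat.multinomial_pos Finset.univ β
    have h2 := Nat.choose_pos (mem_degLE.1 hβ)
    beta_reduce
    exact_mod_cast Nat.mul_pos h1 h2
  · intro y
    rw [add_pow, ← Finset.sum_fiberwise_of_maps_to (s := degLE d k) (t := Finset.range (k + 1))
      (g := fun β => ∑ i, β i)
      (fun β hβ => Finset.mem_range.2 (Nat.lt_succ_iff.2 (mem_degLE.1 hβ)))]
    refine Finset.sum_congr rfl fun m hm => ?_
    have hset : (degLE d k).filter (fun β => ∑ i, β i = m) =
        Finset.piAntidiag Finset.univ m := by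
      ext β
      have := Finset.mem_range.1 hm
      have hsum : Finset.univ.sum β = ∑ i, β i := rfl
      simp only [Finset.mem_filter, mem_degLE, Finset.mem_piAntidiag, Finset.mem_univ,
        implies_true, and_true, hsum]
      omega
    rw [hset, Finset.sum_pow_eq_sum_piAntidiag, one_pow, mul_one, Finset.sum_mul]
    refine Finset.sum_congr rfl fun β hβ => ?_
    have hsum : ∑ i, β i = m := (Finset.mem_piAntidiag.1 hβ).1
    beta_reduce
    rw [hsum]
    push_cast
    ring

lemma relupow_add_neg {k : ℕ} (hk : k ≠ 0) (y : ℝ) :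
    relupow k y + (-1) ^ k * relupow k (-y) = y ^ k := by
  unfold relupow
  rcases lt_trichotomy y 0 with h | h | h
  · rw [if_neg (by linarith), if_pos (by linarith), ← mul_pow]
    simp
  · subst h; simp [hk]
  · rw [if_pos h.le, if_neg (by linarith)]
    simp

/-- Every polynomial of degree at most `k` is a combination of `(k+1)^d` ridge powers whose
directions have entries in `[-1,1]`. -/
lemma exists_ridge (d k : ℕ) (hk : 2 ≤ k) (a : (Fin d → ℕ) → ℝ) :
    ∃ (t : Fin (k + 1) → ℝ) (c : (Fin d → Fin (k + 1)) → ℝ), (∀ j, |t j| ≤ 1) ∧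
      (∀ J, |c J| ≤ ((k : ℝ) / 2 + 1) ^ (2 * (d + 1) + k) * ∑ α ∈ degLE d k, |a α|) ∧
      ∀ x : Fin d → ℝ, ∑ J, c J * (∑ i, t (J i) * x i + 1) ^ k =
        ∑ α ∈ degLE d k, a α * ∏ i, x i ^ α i := by
  obtain ⟨t, L, ht, hL, hδ⟩ := exists_nodes k hk
  obtain ⟨M, hM, hexp⟩ := one_add_sum_pow d k
  have hK : (1 : ℝ) ≤ (k : ℝ) / 2 + 1 := by
    have : (0 : ℝ) ≤ k := by positivity
    linarith
  refine ⟨t, fun J => ∑ α ∈ degLE d k, a α / M α * ∏ i, L (J i) (α i), ht, ?_, ?_⟩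
  · intro J
    refine (Finset.abs_sum_le_sum_abs _ _).trans ?_
    rw [Finset.mul_sum]
    refine Finset.sum_le_sum fun α hα => ?_
    rw [abs_mul, mul_comm]
    refine mul_le_mul ?_ ?_ (abs_nonneg _) (by positivity)
    · rw [Finset.abs_prod]
      calc ∏ i, |L (J i) (α i)| ≤ ∏ i, ((k : ℝ) / 2 + 1) ^ (α i + 2) :=
            Finset.prod_le_prod (fun _ _ => abs_nonneg _) fun i _ => hL _ _
        _ = ((k : ℝ) / 2 + 1) ^ (∑ i, (α i + 2)) := Finset.prod_pow_eq_pow_sum _ _ _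
        _ ≤ _ := by
          refine pow_le_pow_right₀ hK ?_
          have := mem_degLE.1 hα
          rw [Finset.sum_add_distrib]
          simp only [Finset.sum_const, Finset.card_univ, Fintype.card_fin, smul_eq_mul]
          omega
    · have h1 := hM α hα
      rw [abs_div, abs_of_pos (by linarith : 0 < M α)]
      exact div_le_self (abs_nonneg _) h1
  · intro x
    simp_rw [hexp, mul_pow, Finset.prod_mul_distrib, Finset.sum_mul_sum]
    rw [Finset.sum_comm]
    refine Finset.sum_congr rfl fun α hα => ?_
    rw [Finset.sum_comm]
    have hterm : ∀ β ∈ degLE d k, (∑ J : Fin d → Fin (k + 1),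
        a α / M α * (∏ i, L (J i) (α i)) * (M β * ((∏ i, t (J i) ^ β i) * ∏ i, x i ^ β i))) =
        if β = α then a α * ∏ i, x i ^ α i else 0 := by
      intro β hβ
      have hβk : ∀ i, β i ≤ k := fun i => (Finset.single_le_sum (fun _ _ => Nat.zero_le _)
        (Finset.mem_univ i)).trans (mem_degLE.1 hβ)
      have hs := sum_grid_prod hδ α β hβk
      calc _ = (a α / M α * M β * ∏ i, x i ^ β i) *
            ∑ J : Fin d → Fin (k + 1), (∏ i, L (J i) (α i)) * ∏ i, t (J i) ^ β i := by
            rw [Finset.mul_sum]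
            exact Finset.sum_congr rfl fun J _ => by ring
        _ = _ := by
          rw [hs]
          split_ifs with h
          · subst h
            have : M β ≠ 0 := by linarith [hM β hβ]
            field_simp
          · rw [mul_zero]
    rw [Finset.sum_congr rfl hterm, Finset.sum_ite_eq' (degLE d k) α, if_pos hα]

/-- any polynomial `P(x) = Σ_{‖α‖₁ ≤ k} a_α x^α` of degree at most `k`
can be represented on the unit ball `𝔹ᵈ` by a shallow ReLU^k network of width
`N = 2(k+1)ᵈ`, with inner weights and biases bounded by `B` and outer weights
bounded by `M = B⁻ᵏ (k/2 + 1)^{2(d+1)+k} Σ |a_α|`. -/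
theorem shallow_relupow_represents_polynomials (d k : ℕ) (hd : 0 < d) (hk : 2 ≤ k)
    (B : ℝ) (hB : 0 < B) (a : (Fin d → ℕ) → ℝ) :
    ∃ (A : Matrix (Fin (2 * (k + 1) ^ d)) (Fin d) ℝ)
      (b c : Fin (2 * (k + 1) ^ d) → ℝ),
      (∀ i j, |A i j| ≤ B) ∧ (∀ i, |b i| ≤ B) ∧
      (∀ i, |c i| ≤
        (B ^ k)⁻¹ * ((k : ℝ) / 2 + 1) ^ (2 * (d + 1) + k) * ∑ α ∈ degLE d k, |a α|) ∧
      ∀ x : Fin d → ℝ, (∑ i, (x i) ^ 2 ≤ 1) →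
        ∑ α ∈ degLE d k, a α * ∏ i, x i ^ α i =
          ∑ i, c i * relupow k ((∑ j, A i j * x j) + b i) := by
  obtain ⟨t, c, ht, hc, hx⟩ := exists_ridge d k hk a
  have hcard : Fintype.card (Bool × (Fin d → Fin (k + 1))) = 2 * (k + 1) ^ d := by
    simp
  let e := Fintype.equivFinOfCardEq hcard
  -- The Boolean selects between the neurons `σ_k(y)` and `σ_k(-y)`.
  let ε : Bool → ℝ := fun s => if s then 1 else -1
  have hε : ∀ s, |ε s| = 1 := by intro s; cases s <;> simp [ε]
  refine ⟨fun n j => ε (e.symm n).1 * (B * t ((e.symm n).2 j)),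
    fun n => ε (e.symm n).1 * B,
    fun n => ε (e.symm n).1 ^ k * ((B ^ k)⁻¹ * c (e.symm n).2), ?_, ?_, ?_, ?_⟩
  · intro n j
    rw [abs_mul, hε, one_mul, abs_mul, abs_of_pos hB]
    exact mul_le_of_le_one_right hB.le (ht _)
  · intro n
    rw [abs_mul, hε, one_mul, abs_of_pos hB]
  · intro n
    rw [abs_mul, abs_pow, hε, one_pow, one_mul, abs_mul,
      abs_of_pos (by positivity : 0 < (B ^ k)⁻¹), mul_assoc]
    exact mul_le_mul_of_nonneg_left (hc _) (by positivity)
  · intro x _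
    rw [← hx x, ← Equiv.sum_comp e]
    simp only [Equiv.symm_apply_apply]
    rw [Fintype.sum_prod_type_right]
    refine Finset.sum_congr rfl fun J _ => ?_
    have harg : ∀ s, (∑ j, ε s * (B * t (J j)) * x j) + ε s * B =
        ε s * (B * (∑ j, t (J j) * x j + 1)) := by
      intro s
      rw [mul_add, mul_add, mul_one, Finset.mul_sum, Finset.mul_sum]
      congr 1
      exact Finset.sum_congr rfl fun j _ => by ring
    simp only [harg, Fintype.sum_bool]
    have hr := relupow_add_neg (show k ≠ 0 by omega) (B * (∑ j, t (J j) * x j + 1))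
    have hBk : B ^ k ≠ 0 := by positivity
    simp only [ε, if_true, Bool.false_eq_true, if_false, one_mul, one_pow, neg_one_mul]
    calc c J * (∑ i, t (J i) * x i + 1) ^ k
        = (B ^ k)⁻¹ * c J * (B * (∑ j, t (J j) * x j + 1)) ^ k := by
          rw [mul_pow]; field_simp
      _ = _ := by rw [← hr]; ring
end
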